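/- Let 𝔛 be a class of groups closed under isomorphism, quotients and extensions, let H be a group, and let A_1, A_2, B_1, B_2 be normal subgroups of H with A_1 ≤ A_2 and B_1 ≤ B_2. If both quotients A_2B_2/A_1B_1 and (A_2 ∩ B_2)/(A_1 ∩ B_1) lie in 𝔛, then A_2/A_1 lies in 𝔛. -/

import Mathlib

/-!  Common definitions: rooted trees of type `(m n)`, tree automorphisms,
rigid stabilizers, branch groups, and auxiliary notions. -/

universe u

/-- Vertices of the rooted tree of type `m`: finite sequences `(x_0, …, x_{n-1})`
with `x_i ∈ {1, …, m i}` (encoded as `Fin (m i)`). -/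
def Vertex (m : ℕ → ℕ) : Type := Σ n : ℕ, ∀ i : Fin n, Fin (m i)

namespace Vertex

variable {m : ℕ → ℕ}

/-- The level of a vertex: its length. -/
def level (v : Vertex m) : ℕ := v.1

/-- `v` is a (weak) prefix of `w`; i.e. `w` lies in the subtree `T_v`
(`w = v` or `w` is a descendant of `v`). -/
def IsPrefix (v w : Vertex m) : Prop :=
  ∃ h : v.1 ≤ w.1, ∀ i : Fin v.1, w.2 (Fin.castLE h i) = v.2 i

/-- `w` is a child (one-step extension) of `v`. -/
def IsChild (v w : Vertex m) : Prop := w.1 = v.1 + 1 ∧ IsPrefix v w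

end Vertex

/-- The `n`-th layer `L_n` of the tree: all vertices of level `n`. -/
def layer (m : ℕ → ℕ) (n : ℕ) : Set (Vertex m) := {v | v.1 = n}

section Rist

variable {m : ℕ → ℕ} (G : Type*) [Group G] [MulAction G (Vertex m)]

/-- The rigid stabilizer of a vertex `v`: all elements fixing every vertex
outside the subtree `T_v`. -/
def rist (v : Vertex m) : Subgroup G :=
  ⨅ w ∈ {w : Vertex m | ¬ Vertex.IsPrefix v w}, MulAction.stabilizer G w

/-- The subgroup generated by the rigid stabilizers of the vertices in `X`. -/
def ristSet (X : Set (Vertex m)) : Subgroup G := ⨆ v ∈ X, rist G v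

/-- `rist_G(n)`, the rigid stabilizer of the `n`-th layer. -/
def ristLayer (m : ℕ → ℕ) (G : Type*) [Group G] [MulAction G (Vertex m)] (n : ℕ) :
    Subgroup G :=
  ristSet G (layer m n)

/-- The orbit of the vertex `v` under a subgroup `H ≤ G`. -/
def subOrbit (H : Subgroup G) (v : Vertex m) : Set (Vertex m) :=
  {w | ∃ h ∈ H, h • v = w}

/-- The set of orbits of a subgroup `H ≤ G` on a set `X` of vertices. -/
def orbitsOn (H : Subgroup G) (X : Set (Vertex m)) : Set (Set (Vertex m)) :=
  (fun v => subOrbit G H v) '' X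

end Rist

/-- `G` is a branch group on the rooted tree of type `m` (with respect to the given
action): the action is faithful and by tree automorphisms, `G` acts transitively on
each layer, and each `rist_G(n)` has finite index in `G`. -/
structure IsBranchGroup (m : ℕ → ℕ) (G : Type*) [Group G] [MulAction G (Vertex m)] :
    Prop where
  faithful : ∀ g : G, (∀ v : Vertex m, g • v = v) → g = 1
  aut : ∀ (g : G) (v w : Vertex m), Vertex.IsChild v w ↔ Vertex.IsChild (g • v) (g • w)
  trans : ∀ v w : Vertex m, v.1 = w.1 → ∃ g : G, g • v = w
  ristFiniteIndex : ∀ n : ℕ, (ristLayer m G n).FiniteIndex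

/-- A group is virtually soluble if it has a soluble subgroup of finite index. -/
def VirtuallySolvable (Γ : Type*) [Group Γ] : Prop :=
  ∃ S : Subgroup Γ, S.FiniteIndex ∧ IsSolvable ↥S

/-- A group is virtually abelian if it has an abelian subgroup of finite index. -/
def VirtuallyAbelian (Γ : Type*) [Group Γ] : Prop :=
  ∃ S : Subgroup Γ, S.FiniteIndex ∧ ∀ a ∈ S, ∀ b ∈ S, a * b = b * a

/-- For subgroups `A ≤ B` of a group with `A` normalised by `B`, this says that the
factor `B/A` belongs to the class `𝔛`. -/
def FactorIn (𝔛 : (Γ : Type u) → [inst : Group Γ] → Prop) {G : Type u} [Group G]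
    (A B : Subgroup G) : Prop :=
  ∃ hn : (A.subgroupOf B).Normal, letI := hn; 𝔛 (↥B ⧸ A.subgroupOf B)

/-- The factor `B/A` is virtually soluble. -/
def FactorVirtuallySolvable {G : Type*} [Group G] (A B : Subgroup G) : Prop :=
  ∃ hn : (A.subgroupOf B).Normal,
    letI := hn; VirtuallySolvable (↥B ⧸ A.subgroupOf B)

/-- The factor `B/A` is virtually abelian. -/
def FactorVirtuallyAbelian {G : Type*} [Group G] (A B : Subgroup G) : Prop :=
  ∃ hn : (A.subgroupOf B).Normal,
    letI := hn; VirtuallyAbelian (↥B ⧸ A.subgroupOf B)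

/-- `Γ` has `r` infinite normal subgroups that generate their direct product in `Γ`:
each of them intersects trivially the subgroup generated by the others. -/
def HasIndepFamily (Γ : Type*) [Group Γ] (r : ℕ) : Prop :=
  ∃ N : Fin r → Subgroup Γ, (∀ i, (N i).Normal) ∧ (∀ i, Infinite ↥(N i)) ∧
    ∀ i, N i ⊓ (⨆ j ∈ ({i}ᶜ : Set (Fin r)), N j) = ⊥

/-! The subgroup `A₁ ⊔ (A₂ ⊓ B₂) = A₂ ⊓ (A₁ ⊔ B₂)` lies between `A₁` and `A₂`. By the second
isomorphism theorem, the factor below it is a quotient of `(A₂ ⊓ B₂)/(A₁ ⊓ B₁)` and the factor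
above it is a quotient of `(A₂ ⊔ B₂)/(A₁ ⊔ B₁)`. -/

section Factor

variable (𝔛 : (Γ : Type u) → [Group Γ] → Prop)

/-- Closure of a class of groups under isomorphism; only groups in the universe `u` on which the
class is defined can be compared. -/
def ClosedUnderIsomorphism : Prop :=
  ∀ (Γ₁ Γ₂ : Type u) [Group Γ₁] [Group Γ₂], Nonempty (Γ₁ ≃* Γ₂) → 𝔛 Γ₁ → 𝔛 Γ₂

/-- Closure of a class of groups under quotients. Only the quotients `Γ ⧸ N` themselves are
covered: passing to an arbitrary homomorphic image also needs `ClosedUnderIsomorphism`. -/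
def ClosedUnderQuotient : Prop :=
  ∀ (Γ : Type u) [Group Γ] (N : Subgroup Γ) [N.Normal], 𝔛 Γ → 𝔛 (Γ ⧸ N)

/-- Closure of a class of groups under extensions, used to assemble a factor from the factors of
a series. An extension is encoded as a group with an actual normal subgroup `N` and the quotient
`Γ ⧸ N`, rather than as a short exact sequence. -/
def ClosedUnderExtension : Prop :=
  ∀ (Γ : Type u) [Group Γ] (N : Subgroup Γ) [N.Normal], 𝔛 ↥N → 𝔛 (Γ ⧸ N) → 𝔛 Γ

variable {𝔛} {G : Type u} [Group G] {A B C N : Subgroup G}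

theorem inf_sup_assoc_of_le_normalizer (hCA : C ≤ A) (hCB : C ≤ Subgroup.normalizer B) :
    A ⊓ B ⊔ C = A ⊓ (B ⊔ C) := by
  have hCAB : C ≤ Subgroup.normalizer (A ⊓ B : Subgroup G) :=
    (le_inf (hCA.trans Subgroup.le_normalizer) hCB).trans Subgroup.inf_normalizer_le_normalizer_inf
  apply SetLike.coe_injective
  rw [Subgroup.coe_mul_of_right_le_normalizer_left _ _ hCAB, Subgroup.inf_mul_assoc _ _ _ hCA,
    Subgroup.coe_inf, Subgroup.coe_mul_of_right_le_normalizer_left _ _ hCB]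

theorem FactorIn.of_le_left (hiso : ClosedUnderIsomorphism 𝔛) (hquot : ClosedUnderQuotient 𝔛)
    [hB : (B.subgroupOf C).Normal] (hAB : A ≤ B) (h : FactorIn 𝔛 A C) :
    FactorIn 𝔛 B C := by
  obtain ⟨_, hX⟩ := h
  exact ⟨hB, hiso _ _
    ⟨QuotientGroup.quotientQuotientEquivQuotient (A.subgroupOf C) (B.subgroupOf C)
      (Subgroup.comap_mono hAB)⟩ (hquot _ _ hX)⟩

theorem factorIn_inf_iff_factorIn_sup (hiso : ClosedUnderIsomorphism 𝔛)
    (hA : A ≤ Subgroup.normalizer N) : FactorIn 𝔛 (A ⊓ N) A ↔ FactorIn 𝔛 N (A ⊔ N) := by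
  have hnormal_inf := Subgroup.normal_subgroupOf_of_le_normalizer hA
  have hnormal_sup := Subgroup.normal_subgroupOf_sup_of_le_normalizer hA
  let e := QuotientGroup.quotientInfEquivProdNormalizerQuotient A N hA
  rw [FactorIn, Subgroup.inf_subgroupOf_left]
  exact ⟨fun ⟨_, h⟩ ↦ ⟨hnormal_sup, hiso _ _ ⟨e⟩ h⟩,
    fun ⟨_, h⟩ ↦ ⟨hnormal_inf, hiso _ _ ⟨e.symm⟩ h⟩⟩

theorem FactorIn.trans (hiso : ClosedUnderIsomorphism 𝔛) (hext : ClosedUnderExtension 𝔛)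
    [hA : (A.subgroupOf C).Normal] (hAB : A ≤ B) (hBC : B ≤ C)
    (hlower : FactorIn 𝔛 A B) (hupper : FactorIn 𝔛 B C) : FactorIn 𝔛 A C := by
  obtain ⟨_, hlower⟩ := hlower
  obtain ⟨_, hupper⟩ := hupper
  let π := QuotientGroup.mk' (A.subgroupOf C)
  let φ : B →* C ⧸ A.subgroupOf C := π.comp (Subgroup.inclusion hBC)
  have hker : A.subgroupOf B = φ.ker := by
    rw [← MonoidHom.comap_ker, QuotientGroup.ker_mk']
    rfl
  have hrange : φ.range = (B.subgroupOf C).map π := by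
    rw [MonoidHom.range_comp, Subgroup.inclusion_range]
  let eLower : B ⧸ A.subgroupOf B ≃* (B.subgroupOf C).map π :=
    (QuotientGroup.quotientMulEquivOfEq hker).trans <|
      (QuotientGroup.quotientKerEquivRange φ).trans (MulEquiv.subgroupCongr hrange)
  let eUpper : (C ⧸ A.subgroupOf C) ⧸ (B.subgroupOf C).map π ≃* C ⧸ B.subgroupOf C :=
    QuotientGroup.quotientQuotientEquivQuotient _ _ (Subgroup.comap_mono hAB)
  exact ⟨hA, hext _ ((B.subgroupOf C).map π) (hiso _ _ ⟨eLower⟩ hlower)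
    (hiso _ _ ⟨eUpper.symm⟩ hupper)⟩

theorem factor_in_of_join_and_inf_general
    (hiso : ClosedUnderIsomorphism 𝔛) (hquot : ClosedUnderQuotient 𝔛)
    (hext : ClosedUnderExtension 𝔛) {A₁ A₂ B₁ B₂ : Subgroup G}
    (hA₁ : A₂ ≤ Subgroup.normalizer A₁) (hB₂ : A₂ ≤ Subgroup.normalizer B₂)
    (hA : A₁ ≤ A₂) (hB : B₁ ≤ B₂)
    (hjoin : FactorIn 𝔛 (A₁ ⊔ B₁) (A₂ ⊔ B₂))
    (hinf : FactorIn 𝔛 (A₁ ⊓ B₁) (A₂ ⊓ B₂)) :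
    FactorIn 𝔛 A₁ A₂ := by
  have hnorm : A₂ ⊓ B₂ ≤ Subgroup.normalizer A₁ := inf_le_left.trans hA₁
  have hnorm_sup : A₂ ≤ Subgroup.normalizer (B₂ ⊔ A₁ : Subgroup G) :=
    (le_inf hB₂ hA₁).trans (Subgroup.normalizer_inf_normalizer_le_normalizer_sup B₂ A₁)
  have hsup : A₂ ⊔ (B₂ ⊔ A₁) = A₂ ⊔ B₂ := by
    rw [← sup_assoc, sup_eq_left.2 (hA.trans le_sup_left)]
  have hmodular : A₂ ⊓ B₂ ⊔ A₁ = A₂ ⊓ (B₂ ⊔ A₁) :=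
    inf_sup_assoc_of_le_normalizer hA (hA.trans hB₂)
  have hlower : FactorIn 𝔛 A₁ (A₂ ⊓ B₂ ⊔ A₁) := by
    have : ((A₂ ⊓ B₂ ⊓ A₁).subgroupOf (A₂ ⊓ B₂)).Normal := by
      rw [Subgroup.inf_subgroupOf_left]
      exact Subgroup.normal_subgroupOf_of_le_normalizer hnorm
    exact (factorIn_inf_iff_factorIn_sup hiso hnorm).1 <|
      hinf.of_le_left hiso hquot (le_inf (inf_le_inf hA hB) inf_le_left)
  have hupper : FactorIn 𝔛 (A₂ ⊓ (B₂ ⊔ A₁)) A₂ := by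
    have := Subgroup.normal_subgroupOf_sup_of_le_normalizer hnorm_sup
    rw [← hsup] at hjoin
    exact (factorIn_inf_iff_factorIn_sup hiso hnorm_sup).2 <|
      hjoin.of_le_left hiso hquot (sup_le le_sup_right (hB.trans le_sup_left))
  have := Subgroup.normal_subgroupOf_of_le_normalizer hA₁
  rw [← hmodular] at hupper
  exact hlower.trans hiso hext le_sup_right (sup_le inf_le_left hA) hupper

end Factor

/-- **Lemma.** Let `𝔛` be a class of groups closed under isomorphism, quotients and
extensions, and let `A₁ ≤ A₂`, `B₁ ≤ B₂` be normal subgroups of `H`.  If both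
`A₂B₂/A₁B₁` and `(A₂ ∩ B₂)/(A₁ ∩ B₁)` lie in `𝔛`, then `A₂/A₁` lies in `𝔛`.
(For normal subgroups the product `AB` is the join `A ⊔ B`.) -/
theorem factor_in_of_join_and_inf
    (𝔛 : (Γ : Type u) → [inst : Group Γ] → Prop)
    (hiso : ∀ (Γ₁ Γ₂ : Type u) [Group Γ₁] [Group Γ₂],
      Nonempty (Γ₁ ≃* Γ₂) → 𝔛 Γ₁ → 𝔛 Γ₂)
    (hquot : ∀ (Γ : Type u) [Group Γ] (N : Subgroup Γ) [N.Normal], 𝔛 Γ → 𝔛 (Γ ⧸ N))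
    (hext : ∀ (Γ : Type u) [Group Γ] (N : Subgroup Γ) [N.Normal],
      𝔛 ↥N → 𝔛 (Γ ⧸ N) → 𝔛 Γ)
    (H : Type u) [Group H] (A₁ A₂ B₁ B₂ : Subgroup H)
    [A₁.Normal] [A₂.Normal] [B₁.Normal] [B₂.Normal]
    (hA : A₁ ≤ A₂) (hB : B₁ ≤ B₂)
    (hjoin : FactorIn 𝔛 (A₁ ⊔ B₁) (A₂ ⊔ B₂))
    (hinf : FactorIn 𝔛 (A₁ ⊓ B₁) (A₂ ⊓ B₂)) :
    FactorIn 𝔛 A₁ A₂ := by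
  exact factor_in_of_join_and_inf_general hiso hquot hext Subgroup.le_normalizer_of_normal
    Subgroup.le_normalizer_of_normal hA hB hjoin hinf
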